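/- Let d ≥ 2, let X ∈ ℝ^{d×d} be nonsingular with all rows of unit Euclidean norm, and let W be Haar-distributed on the orthogonal group O(d). Then: (i) if φ(X) ≤ 1/(16d), then E[ φ(BN(WX)) ] ≤ φ(X)·(1 − 1/(2d²)); and (ii) if φ(X) > 1/(16d), then E[ φ(BN(WX)) ] ≤ φ(X) − 1/(32d³). -/

import Mathlib

open MeasureTheory Matrix

/-- Euclidean norm of the `i`-th row of a square real matrix. -/
noncomputable def rowNorm {d : ℕ} (X : Matrix (Fin d) (Fin d) ℝ) (i : Fin d) : ℝ :=
  Real.sqrt (∑ j, X i j ^ 2)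

/-- Batch normalization (without mean reduction): each row is rescaled to unit norm. -/
noncomputable def BN {d : ℕ} (X : Matrix (Fin d) (Fin d) ℝ) : Matrix (Fin d) (Fin d) ℝ :=
  Matrix.of fun i j => X i j / rowNorm X i

/-- Isometry gap `φ(X) = -log( det(XᵀX)^{1/d} / ((1/d) Tr(XᵀX)) )`. -/
noncomputable def isoGap {d : ℕ} (X : Matrix (Fin d) (Fin d) ℝ) : ℝ :=
  - Real.log ((Xᵀ * X).det ^ ((1 : ℝ) / d) / ((1 / d : ℝ) * (Xᵀ * X).trace))

/-- Isometry `I(X) = exp(-φ(X))`. -/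
noncomputable def isoI {d : ℕ} (X : Matrix (Fin d) (Fin d) ℝ) : ℝ :=
  Real.exp (- isoGap X)

/-- Matrices inherit the (Borel) product measurable structure of `Fin d → Fin d → ℝ`. -/
instance matrixMeasurableSpace {d : ℕ} : MeasurableSpace (Matrix (Fin d) (Fin d) ℝ) :=
  (inferInstance : MeasurableSpace (Fin d → Fin d → ℝ))

/-- `μ` is the Haar probability measure on the orthogonal group `O(d)`, viewed as a
measure on `d × d` real matrices: it is a probability measure, concentrated on the
orthogonal matrices, and invariant under left and right translation by any orthogonal
matrix (these properties characterize the Haar probability measure uniquely). -/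
def IsHaarOrthogonal {d : ℕ} (μ : Measure (Matrix (Fin d) (Fin d) ℝ)) : Prop :=
  IsProbabilityMeasure μ ∧
  (∀ᵐ W ∂μ, Wᵀ * W = 1) ∧
  ∀ U : Matrix (Fin d) (Fin d) ℝ, Uᵀ * U = 1 →
    μ.map (fun W => U * W) = μ ∧ μ.map (fun W => W * U) = μ

/-- The spectral decomposition of `X * Xᵀ` for a nonsingular real matrix `X`. -/
lemma exists_orthogonal_diagonal {d : ℕ} (X : Matrix (Fin d) (Fin d) ℝ) (hX : X.det ≠ 0) :
    ∃ (U : Matrix (Fin d) (Fin d) ℝ) (l : Fin d → ℝ), Uᵀ * U = 1 ∧ (∀ k, 0 < l k) ∧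
      X * Xᵀ = U * diagonal l * Uᵀ := by
  have hu : IsUnit X := (Matrix.isUnit_iff_isUnit_det X).2 (isUnit_iff_ne_zero.2 hX)
  have hpos : (X * Xᵀ).PosDef := by
    have h := Matrix.PosDef.one (n := Fin d) (R := ℝ)
    have h2 := (Matrix.IsUnit.posDef_star_right_conjugate_iff (x := (1 : Matrix (Fin d) (Fin d) ℝ))
      hu).2 h
    simpa [Matrix.star_eq_conjTranspose, Matrix.conjTranspose_eq_transpose_of_trivial] using h2
  have hh := hpos.isHermitian
  refine ⟨hh.eigenvectorUnitary, hh.eigenvalues, ?_, hpos.eigenvalues_pos, ?_⟩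
  · have := Matrix.UnitaryGroup.star_mul_self hh.eigenvectorUnitary
    simpa [Matrix.star_eq_conjTranspose, Matrix.conjTranspose_eq_transpose_of_trivial] using this
  · have := hh.spectral_theorem
    rw [Unitary.conjStarAlgAut_apply] at this
    simpa [Matrix.star_eq_conjTranspose, Matrix.conjTranspose_eq_transpose_of_trivial,
      Function.comp_def] using this

lemma isoGap_eq_of_unit_rows {d : ℕ} (hd : 0 < d) (X : Matrix (Fin d) (Fin d) ℝ)
    (hrows : ∀ i, ∑ j, X i j ^ 2 = 1) :
    isoGap X = -((1 / (d : ℝ)) * Real.log (X.det ^ 2)) := by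
  have hd' : (d : ℝ) ≠ 0 := by positivity
  have htr : (Xᵀ * X).trace = d := by
    rw [Matrix.trace_mul_comm]
    simp [Matrix.trace, Matrix.mul_apply, ← pow_two, hrows]
  rw [isoGap, htr, Matrix.det_mul, Matrix.det_transpose, ← pow_two]
  rw [one_div_mul_cancel hd', div_one]
  rcases eq_or_ne X.det 0 with h | h
  · have : (1 / d : ℝ) ≠ 0 := by positivity
    simp [h, Real.zero_rpow, hd']
  · rw [Real.log_rpow (by positivity)]

lemma sum_eigen_of_unit_rows {d : ℕ} {X U : Matrix (Fin d) (Fin d) ℝ} {l : Fin d → ℝ}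
    (hrows : ∀ i, ∑ j, X i j ^ 2 = 1) (hU : Uᵀ * U = 1)
    (h : X * Xᵀ = U * diagonal l * Uᵀ) : ∑ k, l k = d := by
  have h1 : (X * Xᵀ).trace = d := by
    simp [Matrix.trace, Matrix.mul_apply, ← pow_two, hrows]
  rw [h, Matrix.trace_mul_comm, ← Matrix.mul_assoc, hU, Matrix.one_mul,
    Matrix.trace_diagonal] at h1
  exact h1

lemma det_sq_eq_prod_eigen {d : ℕ} {X U : Matrix (Fin d) (Fin d) ℝ} {l : Fin d → ℝ}
    (hU : Uᵀ * U = 1) (h : X * Xᵀ = U * diagonal l * Uᵀ) : X.det ^ 2 = ∏ k, l k := by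
  have h1 := congrArg Matrix.det h
  have h2 := congrArg Matrix.det hU
  simp only [Matrix.det_mul, Matrix.det_transpose, Matrix.det_diagonal, Matrix.det_one] at h1 h2
  linear_combination h1 + (∏ k, l k) * h2

lemma isoGap_eq_sum_log {d : ℕ} (hd : 0 < d) {X U : Matrix (Fin d) (Fin d) ℝ} {l : Fin d → ℝ}
    (hrows : ∀ i, ∑ j, X i j ^ 2 = 1) (hU : Uᵀ * U = 1) (hl : ∀ k, 0 < l k)
    (h : X * Xᵀ = U * diagonal l * Uᵀ) :
    isoGap X = -((1 / (d : ℝ)) * ∑ k, Real.log (l k)) := by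
  rw [isoGap_eq_of_unit_rows hd X hrows, det_sq_eq_prod_eigen hU h,
    Real.log_prod (fun k _ => (hl k).ne')]

lemma isoGap_nonneg_of_unit_rows {d : ℕ} (hd : 0 < d) (X : Matrix (Fin d) (Fin d) ℝ)
    (hX : X.det ≠ 0) (hrows : ∀ i, ∑ j, X i j ^ 2 = 1) : 0 ≤ isoGap X := by
  obtain ⟨U, l, hU, hl, h⟩ := exists_orthogonal_diagonal X hX
  rw [isoGap_eq_sum_log hd hrows hU hl h]
  have h1 : ∑ k, Real.log (l k) ≤ ∑ k, (l k - 1) :=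
    Finset.sum_le_sum fun k _ => Real.log_le_sub_one_of_pos (hl k)
  rw [Finset.sum_sub_distrib, sum_eigen_of_unit_rows hrows hU h] at h1
  have h2 : ∑ k, Real.log (l k) ≤ 0 := by simpa using h1
  have : (0 : ℝ) ≤ 1 / d := by positivity
  nlinarith [mul_nonneg this (neg_nonneg.2 h2)]

lemma sum_sq_row_pos {d : ℕ} {Y : Matrix (Fin d) (Fin d) ℝ} (hY : Y.det ≠ 0) (i : Fin d) :
    0 < ∑ j, Y i j ^ 2 := by
  refine lt_of_le_of_ne (Finset.sum_nonneg fun j _ => sq_nonneg _) fun h => hY ?_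
  refine Matrix.det_eq_zero_of_row_eq_zero i fun j => ?_
  have := (Finset.sum_eq_zero_iff_of_nonneg (fun j _ => sq_nonneg (Y i j))).1 h.symm j
    (Finset.mem_univ j)
  exact pow_eq_zero_iff (two_ne_zero) |>.1 this

lemma BN_unit_rows {d : ℕ} {Y : Matrix (Fin d) (Fin d) ℝ} (hY : Y.det ≠ 0) (i : Fin d) :
    ∑ j, BN Y i j ^ 2 = 1 := by
  have h := sum_sq_row_pos hY i
  simp only [BN, Matrix.of_apply, div_pow, rowNorm, Real.sq_sqrt h.le]
  rw [← Finset.sum_div, div_self h.ne']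

lemma det_BN_sq {d : ℕ} {Y : Matrix (Fin d) (Fin d) ℝ} (hY : Y.det ≠ 0) :
    (BN Y).det ^ 2 = Y.det ^ 2 / ∏ i, ∑ j, Y i j ^ 2 := by
  have h : BN Y = Matrix.of fun i j => (rowNorm Y i)⁻¹ * Y i j := by
    ext i j
    simp [BN, div_eq_inv_mul]
  rw [h, Matrix.det_mul_column, mul_pow, ← Finset.prod_pow]
  have : ∀ i, ((rowNorm Y i)⁻¹) ^ 2 = (∑ j, Y i j ^ 2)⁻¹ := fun i => by
    rw [inv_pow, rowNorm, Real.sq_sqrt (sum_sq_row_pos hY i).le]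
  simp only [this, Finset.prod_inv_distrib]
  rw [div_eq_inv_mul]

lemma det_mul_ne_zero_of_orthogonal {d : ℕ} {X W : Matrix (Fin d) (Fin d) ℝ} (hX : X.det ≠ 0)
    (hW : Wᵀ * W = 1) : (W * X).det ≠ 0 := by
  rw [Matrix.det_mul]
  refine mul_ne_zero (fun h0 => ?_) hX
  have := congrArg Matrix.det hW
  simp [h0] at this

lemma isoGap_BN_mul {d : ℕ} (hd : 0 < d) {X W : Matrix (Fin d) (Fin d) ℝ} (hX : X.det ≠ 0)
    (hrows : ∀ i, ∑ j, X i j ^ 2 = 1) (hW : Wᵀ * W = 1) :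
    isoGap (BN (W * X)) = isoGap X + (1 / (d : ℝ)) * ∑ i, Real.log (∑ j, (W * X) i j ^ 2) := by
  have hW2 : W.det ^ 2 = 1 := by
    have := congrArg Matrix.det hW
    rw [Matrix.det_mul, Matrix.det_transpose, Matrix.det_one] at this
    rw [pow_two, this]
  have hY := det_mul_ne_zero_of_orthogonal hX hW
  rw [isoGap_eq_of_unit_rows hd _ (BN_unit_rows hY), isoGap_eq_of_unit_rows hd _ hrows,
    det_BN_sq hY, Real.log_div (pow_ne_zero _ hY)
      (Finset.prod_pos fun i _ => sum_sq_row_pos hY i).ne',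
    Real.log_prod (fun i _ => (sum_sq_row_pos hY i).ne'), Matrix.det_mul, mul_pow, hW2, one_mul]
  ring

lemma sum_sq_row_mul_eq {d : ℕ} {X U : Matrix (Fin d) (Fin d) ℝ} {l : Fin d → ℝ}
    (h : X * Xᵀ = U * diagonal l * Uᵀ) (W : Matrix (Fin d) (Fin d) ℝ) (i : Fin d) :
    ∑ j, (W * X) i j ^ 2 = ∑ k, l k * (W * U) i k ^ 2 := by
  have h1 : (W * X) * (W * X)ᵀ = (W * U) * diagonal l * (W * U)ᵀ := by
    rw [Matrix.transpose_mul, Matrix.transpose_mul]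
    calc W * X * (Xᵀ * Wᵀ) = W * (X * Xᵀ) * Wᵀ := by simp only [Matrix.mul_assoc]
      _ = _ := by rw [h]; simp only [Matrix.mul_assoc]
  have h2 := congrFun (congrFun h1 i) i
  rw [Matrix.mul_apply, Matrix.mul_apply] at h2
  simp only [Matrix.mul_diagonal, Matrix.transpose_apply] at h2
  simp only [pow_two]
  rw [h2]
  exact Finset.sum_congr rfl fun k _ => by ring

lemma log_le_half_sub_inv {z : ℝ} (hz : 1 ≤ z) : Real.log z ≤ (z - z⁻¹) / 2 := by
  rw [← Real.sinh_log (by linarith)]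
  exact Real.self_le_sinh_iff.2 (Real.log_nonneg hz)

lemma two_mul_sub_div_le_log {z : ℝ} (hz : 1 ≤ z) : 2 * (z - 1) / (z + 1) ≤ Real.log z := by
  have h := Real.le_log_one_add_of_nonneg (sub_nonneg.2 hz)
  rw [add_sub_cancel] at h
  convert h using 2
  ring

lemma log_le_sub_sq_div {z M : ℝ} (hM : 1 ≤ M) (hz : 0 < z) (hzM : z ≤ M) :
    Real.log z ≤ (z - 1) - (z - 1) ^ 2 / (2 * M) := by
  rcases le_total 1 z with h | h
  · refine (log_le_half_sub_inv h).trans ?_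
    have h1 : (z - 1) ^ 2 / (2 * M) ≤ (z - 1) ^ 2 / (2 * z) := by gcongr
    have h2 : (z - z⁻¹) / 2 = (z - 1) - (z - 1) ^ 2 / (2 * z) := by
      field_simp
      ring
    linarith
  · have h1 := two_mul_sub_div_le_log ((one_le_inv₀ hz).2 h)
    rw [Real.log_inv] at h1
    have h2 : (z - 1) ^ 2 / (2 * M) ≤ (z - 1) ^ 2 / 2 := by
      gcongr
      linarith
    have h3 : 2 * (z⁻¹ - 1) / (z⁻¹ + 1) = 2 * (1 - z) / (1 + z) := by
      field_simp
    have h4 : (1 - z) + (z - 1) ^ 2 / 2 ≤ 2 * (1 - z) / (1 + z) := by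
      rw [le_div_iff₀ (by positivity)]
      nlinarith [pow_nonneg (sub_nonneg.2 h) 3]
    linarith

lemma neg_log_le_of_half_le {z : ℝ} (hz : 1 / 2 ≤ z) :
    -Real.log z ≤ -(z - 1) + (z - 1) ^ 2 := by
  have hz0 : 0 < z := by linarith
  rcases le_total 1 z with h | h
  · have h1 := two_mul_sub_div_le_log h
    have h2 : (z - 1) - (z - 1) ^ 2 ≤ 2 * (z - 1) / (z + 1) := by
      rw [le_div_iff₀ (by positivity)]
      nlinarith [mul_nonneg (mul_nonneg (sub_nonneg.2 h) (sub_nonneg.2 h)) hz0.le]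
    linarith
  · have h1 := log_le_half_sub_inv ((one_le_inv₀ hz0).2 h)
    rw [Real.log_inv, inv_inv] at h1
    refine h1.trans ?_
    rw [← sub_nonneg]
    have h2 : -(z - 1) + (z - 1) ^ 2 - (z⁻¹ - z) / 2 =
        (1 - z) * ((2 * z - 1) * (1 - z)) / (2 * z) := by
      field_simp
      ring
    rw [h2]
    have h3 := sub_nonneg.2 h
    have h4 : 0 ≤ 2 * z - 1 := by linarith
    positivity

lemma min_le_sum_sq {d : ℕ} {l : Fin d → ℝ} (hs : ∑ k, l k = d) :
    min (1 / 4) (-∑ k, Real.log (l k)) ≤ ∑ k, (l k - 1) ^ 2 := by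
  by_cases h : ∀ k, 1 / 2 ≤ l k
  · refine (min_le_right _ _).trans ?_
    rw [← Finset.sum_neg_distrib]
    refine (Finset.sum_le_sum fun k _ => neg_log_le_of_half_le (h k)).trans ?_
    rw [Finset.sum_add_distrib, Finset.sum_neg_distrib, Finset.sum_sub_distrib, hs]
    simp
  · push Not at h
    obtain ⟨k, hk⟩ := h
    refine (min_le_left _ _).trans ?_
    have := Finset.single_le_sum (f := fun k => (l k - 1) ^ 2) (fun k _ => sq_nonneg _)
      (Finset.mem_univ k)
    refine le_trans ?_ this
    nlinarith

/-- The Householder reflection in the hyperplane orthogonal to `e k + t • e l`. -/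
noncomputable def planeReflection {d : ℕ} (k l : Fin d) (t : ℝ) : Matrix (Fin d) (Fin d) ℝ :=
  1 - (2 / (1 + t ^ 2)) • Matrix.vecMulVec (Pi.single k 1 + Pi.single l t)
    (Pi.single k 1 + Pi.single l t)

lemma planeReflection_orthogonal {d : ℕ} {k l : Fin d} (hkl : k ≠ l) (t : ℝ) :
    (planeReflection k l t)ᵀ * planeReflection k l t = 1 := by
  have hv : (Pi.single k 1 + Pi.single l t : Fin d → ℝ) ⬝ᵥ (Pi.single k 1 + Pi.single l t) =
      1 + t ^ 2 := by
    simp [hkl, hkl.symm, pow_two]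
  have ht : (1 + t ^ 2 : ℝ) ≠ 0 := by positivity
  rw [planeReflection, Matrix.transpose_sub, Matrix.transpose_smul, Matrix.transpose_vecMulVec,
    Matrix.transpose_one]
  simp only [Matrix.sub_mul, Matrix.mul_sub, Matrix.one_mul, Matrix.mul_one, Matrix.smul_mul,
    Matrix.mul_smul, Matrix.vecMulVec_mul_vecMulVec, hv, Matrix.vecMulVec_smul]
  match_scalars
  · ring
  · field_simp
    ring

lemma mul_planeReflection_apply {d : ℕ} {k l : Fin d} (t : ℝ)
    (W : Matrix (Fin d) (Fin d) ℝ) (i j : Fin d) :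
    (W * planeReflection k l t) i j = W i j - (2 / (1 + t ^ 2)) * (W i k + t * W i l) *
      ((Pi.single k 1 + Pi.single l t : Fin d → ℝ) j) := by
  rw [planeReflection, Matrix.mul_sub, Matrix.mul_one, Matrix.mul_smul, Matrix.mul_vecMulVec]
  simp only [Matrix.sub_apply, Matrix.smul_apply, Matrix.vecMulVec_apply, Matrix.mulVec_add,
    Matrix.mulVec_single, Pi.add_apply, smul_eq_mul]
  simp
  ring

lemma measurable_matrix_entry {d : ℕ} (i j : Fin d) :
    Measurable fun W : Matrix (Fin d) (Fin d) ℝ => W i j :=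
  (measurable_pi_apply j).comp (measurable_pi_apply (X := fun _ : Fin d => Fin d → ℝ) i)

lemma measurable_matrix_mul_right {d : ℕ} (U : Matrix (Fin d) (Fin d) ℝ) :
    Measurable fun W : Matrix (Fin d) (Fin d) ℝ => W * U := by
  refine measurable_pi_lambda _ fun i => measurable_pi_lambda _ fun j => ?_
  simp only [Matrix.mul_apply]
  exact Finset.measurable_sum _ fun k _ => (measurable_matrix_entry i k).mul_const _

namespace IsHaarOrthogonal

variable {d : ℕ} {μ : Measure (Matrix (Fin d) (Fin d) ℝ)}

lemma integral_mul_right (hμ : IsHaarOrthogonal μ) {U : Matrix (Fin d) (Fin d) ℝ}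
    (hU : Uᵀ * U = 1) {f : Matrix (Fin d) (Fin d) ℝ → ℝ} (hf : Measurable f) :
    ∫ W, f (W * U) ∂μ = ∫ W, f W ∂μ := by
  conv_rhs => rw [← (hμ.2.2 U hU).2]
  rw [integral_map (measurable_matrix_mul_right U).aemeasurable hf.aestronglyMeasurable]

lemma ae_row_sum_sq (hμ : IsHaarOrthogonal μ) : ∀ᵐ W ∂μ, ∀ i, ∑ j, W i j ^ 2 = 1 := by
  filter_upwards [hμ.2.1] with W hW i
  have hW' : W * Wᵀ = 1 := mul_eq_one_comm.1 hW
  have h := congrFun (congrFun hW' i) i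
  simpa [Matrix.mul_apply, ← pow_two] using h

lemma ae_abs_entry_le (hμ : IsHaarOrthogonal μ) : ∀ᵐ W ∂μ, ∀ i j, |W i j| ≤ 1 := by
  filter_upwards [hμ.ae_row_sum_sq] with W hW i j
  have := Finset.single_le_sum (f := fun j => W i j ^ 2) (fun j _ => sq_nonneg _)
    (Finset.mem_univ j)
  rw [hW i] at this
  exact (sq_le_one_iff_abs_le_one _).1 this

lemma integrable_monomial (hμ : IsHaarOrthogonal μ) (i k l : Fin d) (m n : ℕ) :
    Integrable (fun W => W i k ^ m * W i l ^ n) μ := by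
  have := hμ.1
  refine Integrable.of_bound (((measurable_matrix_entry i k).pow_const m).mul
    ((measurable_matrix_entry i l).pow_const n)).aestronglyMeasurable 1 ?_
  filter_upwards [hμ.ae_abs_entry_le] with W hW
  rw [Real.norm_eq_abs, abs_mul, abs_pow, abs_pow]
  exact mul_le_one₀ (pow_le_one₀ (abs_nonneg _) (hW i k)) (by positivity)
    (pow_le_one₀ (abs_nonneg _) (hW i l))

lemma integrable_pow (hμ : IsHaarOrthogonal μ) (i k : Fin d) (m : ℕ) :
    Integrable (fun W => W i k ^ m) μ := by
  simpa using hμ.integrable_monomial i k k m 0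

lemma integral_pow_eq (hμ : IsHaarOrthogonal μ) (i k l : Fin d) (m : ℕ) :
    ∫ W, W i k ^ m ∂μ = ∫ W, W i l ^ m ∂μ := by
  rcases eq_or_ne k l with rfl | hkl
  · rfl
  rw [← hμ.integral_mul_right (planeReflection_orthogonal hkl (-1))
    ((measurable_matrix_entry i k).pow_const m)]
  refine integral_congr_ae (Filter.Eventually.of_forall fun W => ?_)
  simp only [mul_planeReflection_apply]
  simp [hkl]
  norm_num

lemma integral_sq_mul_sq (hμ : IsHaarOrthogonal μ) (i : Fin d) {k l : Fin d} (hkl : k ≠ l) :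
    ∫ W, W i k ^ 4 ∂μ = 3 * ∫ W, W i k ^ 2 * W i l ^ 2 ∂μ := by
  have hm := (measurable_matrix_entry i k).pow_const 4
  have h1 := hμ.integral_mul_right (planeReflection_orthogonal hkl 2) hm
  have h2 := hμ.integral_mul_right (planeReflection_orthogonal hkl (-2)) hm
  have e1 : ∀ W : Matrix (Fin d) (Fin d) ℝ, (W * planeReflection k l 2) i k ^ 4 =
      (81 * W i k ^ 4 + 864 * (W i k ^ 2 * W i l ^ 2) + 256 * W i l ^ 4) / 625 +
        (-432 * (W i k ^ 3 * W i l ^ 1) - 768 * (W i k ^ 1 * W i l ^ 3)) / 625 := fun W => by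
    rw [mul_planeReflection_apply]
    simp [hkl]
    ring
  have e2 : ∀ W : Matrix (Fin d) (Fin d) ℝ, (W * planeReflection k l (-2)) i k ^ 4 =
      (81 * W i k ^ 4 + 864 * (W i k ^ 2 * W i l ^ 2) + 256 * W i l ^ 4) / 625 -
        (-432 * (W i k ^ 3 * W i l ^ 1) - 768 * (W i k ^ 1 * W i l ^ 3)) / 625 := fun W => by
    rw [mul_planeReflection_apply]
    simp [hkl]
    ring
  simp only [e1] at h1
  simp only [e2] at h2
  have i1 := (hμ.integrable_pow i k 4).const_mul 81
  have i2 := (hμ.integrable_monomial i k l 2 2).const_mul 864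
  have i3 := (hμ.integrable_pow i l 4).const_mul 256
  have i4 := (hμ.integrable_monomial i k l 3 1).const_mul (-432)
  have i5 := (hμ.integrable_monomial i k l 1 3).const_mul 768
  have ieven := ((i1.add i2).add i3).div_const 625
  have iodd := (i4.sub i5).div_const 625
  have h3 := integral_add ieven iodd
  have h4 := integral_sub ieven iodd
  have h5 := integral_add (i1.add i2) i3
  have h6 := integral_add i1 i2
  have h7 := hμ.integral_pow_eq i l k 4
  simp only [Pi.add_apply, Pi.sub_apply] at h3 h4 h5 h6
  rw [h1] at h3
  rw [h2] at h4
  simp only [integral_div, integral_const_mul] at h3 h4 h5 h6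
  rw [h5, h6] at h3 h4
  rw [h7] at h3 h4
  linarith

lemma exists_fourth_moment (hμ : IsHaarOrthogonal μ) (i : Fin d) :
    ∃ b : ℝ, ∀ k l, ∫ W, W i k ^ 2 * W i l ^ 2 ∂μ = b * (1 + 2 * if k = l then 1 else 0) := by
  refine ⟨(∫ W, W i i ^ 4 ∂μ) / 3, fun k l => ?_⟩
  rw [hμ.integral_pow_eq i i k 4]
  split_ifs with h
  · subst h
    have : ∀ W : Matrix (Fin d) (Fin d) ℝ, W i k ^ 2 * W i k ^ 2 = W i k ^ 4 := fun W => by ring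
    simp only [this]
    ring
  · rw [hμ.integral_sq_mul_sq i h]
    ring

lemma integrable_quadratic (hμ : IsHaarOrthogonal μ) (i : Fin d) (z : Fin d → ℝ) :
    Integrable (fun W => ∑ k, z k * W i k ^ 2) μ :=
  integrable_finsetSum _ fun k _ => (hμ.integrable_pow i k 2).const_mul (z k)

lemma integral_quadratic (hμ : IsHaarOrthogonal μ) (i : Fin d) {z : Fin d → ℝ}
    (hz : ∑ k, z k = 0) : ∫ W, ∑ k, z k * W i k ^ 2 ∂μ = 0 := by
  rw [integral_finsetSum _ fun k _ => (hμ.integrable_pow i k 2).const_mul (z k)]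
  simp only [integral_const_mul, hμ.integral_pow_eq i _ i 2]
  rw [← Finset.sum_mul, hz, zero_mul]

lemma quadratic_sq_eq (i : Fin d) (z : Fin d → ℝ) (W : Matrix (Fin d) (Fin d) ℝ) :
    (∑ k, z k * W i k ^ 2) ^ 2 = ∑ k, ∑ l, (z k * z l) * (W i k ^ 2 * W i l ^ 2) := by
  rw [pow_two, Finset.sum_mul_sum]
  exact Finset.sum_congr rfl fun k _ => Finset.sum_congr rfl fun l _ => by ring

lemma integrable_quadratic_sq (hμ : IsHaarOrthogonal μ) (i : Fin d) (z : Fin d → ℝ) :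
    Integrable (fun W => (∑ k, z k * W i k ^ 2) ^ 2) μ := by
  simp only [quadratic_sq_eq]
  exact integrable_finsetSum _ fun k _ => integrable_finsetSum _ fun l _ =>
    (hμ.integrable_monomial i k l 2 2).const_mul _

lemma integral_quadratic_sq_of_fourth_moment (hμ : IsHaarOrthogonal μ) (i : Fin d) {b : ℝ}
    (hb : ∀ k l, ∫ W, W i k ^ 2 * W i l ^ 2 ∂μ = b * (1 + 2 * if k = l then 1 else 0))
    (z : Fin d → ℝ) :
    ∫ W, (∑ k, z k * W i k ^ 2) ^ 2 ∂μ = b * ((∑ k, z k) ^ 2 + 2 * ∑ k, z k ^ 2) := by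
  simp only [quadratic_sq_eq]
  rw [integral_finsetSum _ fun k _ => integrable_finsetSum _ fun l _ =>
    (hμ.integrable_monomial i k l 2 2).const_mul _]
  have : ∀ k, ∫ W, ∑ l, (z k * z l) * (W i k ^ 2 * W i l ^ 2) ∂μ =
      b * (z k * ∑ l, z l) + 2 * b * z k ^ 2 := fun k => by
    rw [integral_finsetSum _ fun l _ => (hμ.integrable_monomial i k l 2 2).const_mul _]
    simp only [integral_const_mul, hb, mul_add, Finset.sum_add_distrib, mul_one, mul_ite, mul_zero,
      Finset.sum_ite_eq, Finset.mem_univ, if_true]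
    rw [Finset.mul_sum, Finset.mul_sum]
    congr 1
    · exact Finset.sum_congr rfl fun l _ => by ring
    · ring
  simp only [this]
  rw [Finset.sum_add_distrib, ← Finset.mul_sum, ← Finset.sum_mul, ← Finset.mul_sum]
  ring

lemma integral_quadratic_sq (hμ : IsHaarOrthogonal μ) (hd : 0 < d) (i : Fin d) {z : Fin d → ℝ}
    (hz : ∑ k, z k = 0) :
    ∫ W, (∑ k, z k * W i k ^ 2) ^ 2 ∂μ = 2 / (d * (d + 2)) * ∑ k, z k ^ 2 := by
  have := hμ.1
  obtain ⟨b, hb⟩ := hμ.exists_fourth_moment i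
  have h1 := hμ.integral_quadratic_sq_of_fourth_moment i hb fun _ => 1
  have h2 : ∫ W, (∑ k, 1 * W i k ^ 2) ^ 2 ∂μ = 1 := by
    rw [integral_congr_ae (g := fun _ => (1 : ℝ))]
    · simp
    · filter_upwards [hμ.ae_row_sum_sq] with W hW
      simp [hW i]
  rw [h2] at h1
  simp only [Finset.sum_const, Finset.card_univ, Fintype.card_fin, nsmul_eq_mul, mul_one,
    one_pow] at h1
  rw [hμ.integral_quadratic_sq_of_fourth_moment i hb z, hz]
  have hd' : (0 : ℝ) < d := by exact_mod_cast hd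
  field_simp
  linear_combination (-2 * ∑ k, z k ^ 2) * h1

end IsHaarOrthogonal

lemma isoGap_BN_mul_le {d : ℕ} (hd : 0 < d) {X U W : Matrix (Fin d) (Fin d) ℝ} {l : Fin d → ℝ}
    (hX : X.det ≠ 0) (hrows : ∀ i, ∑ j, X i j ^ 2 = 1) (hU : Uᵀ * U = 1) (hl : ∀ k, 0 < l k)
    (h : X * Xᵀ = U * diagonal l * Uᵀ) (hW : Wᵀ * W = 1) :
    isoGap (BN (W * X)) ≤ isoGap X + (1 / (d : ℝ)) * ∑ i, (∑ k, (l k - 1) * (W * U) i k ^ 2 -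
      (∑ k, (l k - 1) * (W * U) i k ^ 2) ^ 2 / (2 * (d : ℝ))) := by
  rw [isoGap_BN_mul hd hX hrows hW]
  gcongr with i
  have hd1 : (1 : ℝ) ≤ d := by exact_mod_cast hd
  have hWU : (W * U) * (W * U)ᵀ = 1 := by
    rw [mul_eq_one_comm, Matrix.transpose_mul]
    calc Uᵀ * Wᵀ * (W * U) = Uᵀ * (Wᵀ * W) * U := by simp only [Matrix.mul_assoc]
      _ = 1 := by rw [hW, Matrix.mul_one, hU]
  have hrow : ∑ k, (W * U) i k ^ 2 = 1 := by
    have h1 := congrFun (congrFun hWU i) i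
    rw [Matrix.mul_apply] at h1
    simpa only [Matrix.transpose_apply, ← pow_two, Matrix.one_apply_eq] using h1
  have hsub : ∑ k, (l k - 1) * (W * U) i k ^ 2 = ∑ j, (W * X) i j ^ 2 - 1 := by
    rw [sum_sq_row_mul_eq h]
    simp only [sub_mul, Finset.sum_sub_distrib, one_mul, hrow]
  have hY := det_mul_ne_zero_of_orthogonal hX hW
  have hle : ∑ j, (W * X) i j ^ 2 ≤ d := by
    rw [sum_sq_row_mul_eq h, ← sum_eigen_of_unit_rows hrows hU h]
    refine Finset.sum_le_sum fun k _ => ?_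
    have := Finset.single_le_sum (f := fun k => (W * U) i k ^ 2) (fun k _ => sq_nonneg _)
      (Finset.mem_univ k)
    rw [hrow] at this
    exact mul_le_of_le_one_right (hl k).le this
  rw [hsub]
  exact log_le_sub_sq_div hd1 (sum_sq_row_pos hY i) hle

lemma integral_isoGap_BN_mul_le {d : ℕ} (hd : 0 < d) {X U : Matrix (Fin d) (Fin d) ℝ}
    {l : Fin d → ℝ} (hX : X.det ≠ 0) (hrows : ∀ i, ∑ j, X i j ^ 2 = 1) (hU : Uᵀ * U = 1)
    (hl : ∀ k, 0 < l k) (h : X * Xᵀ = U * diagonal l * Uᵀ)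
    {μ : Measure (Matrix (Fin d) (Fin d) ℝ)} (hμ : IsHaarOrthogonal μ) :
    ∫ W, isoGap (BN (W * X)) ∂μ ≤
      isoGap X - 1 / ((d : ℝ) ^ 2 * (d + 2)) * ∑ k, (l k - 1) ^ 2 := by
  have := hμ.1
  have hd' : (0 : ℝ) < d := by exact_mod_cast hd
  have hz : ∑ k, (l k - 1) = 0 := by
    rw [Finset.sum_sub_distrib, sum_eigen_of_unit_rows hrows hU h]
    simp
  let f : Matrix (Fin d) (Fin d) ℝ → ℝ := fun V =>
    isoGap X + (1 / (d : ℝ)) * ∑ i, (∑ k, (l k - 1) * V i k ^ 2 -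
      (∑ k, (l k - 1) * V i k ^ 2) ^ 2 / (2 * (d : ℝ)))
  have hq : ∀ i, Measurable fun V : Matrix (Fin d) (Fin d) ℝ => ∑ k, (l k - 1) * V i k ^ 2 :=
    fun i => Finset.measurable_sum _ fun k _ =>
      ((measurable_matrix_entry i k).pow_const 2).const_mul _
  have hfm : Measurable f :=
    ((Finset.measurable_sum _ fun i _ =>
      (hq i).sub (((hq i).pow_const 2).div_const _)).const_mul _).const_add _
  have hint : ∀ i, Integrable (fun V : Matrix (Fin d) (Fin d) ℝ => ∑ k, (l k - 1) * V i k ^ 2 -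
      (∑ k, (l k - 1) * V i k ^ 2) ^ 2 / (2 * (d : ℝ))) μ := fun i =>
    (hμ.integrable_quadratic i _).sub ((hμ.integrable_quadratic_sq i _).div_const _)
  have hfi : Integrable f μ :=
    (integrable_const _).add ((integrable_finsetSum _ fun i _ => hint i).const_mul _)
  have hfi' : Integrable (fun W => f (W * U)) μ := by
    have h1 : Integrable f (μ.map fun W => W * U) := by rwa [(hμ.2.2 U hU).2]
    exact h1.comp_measurable (measurable_matrix_mul_right U)
  have hmono : ∫ W, isoGap (BN (W * X)) ∂μ ≤ ∫ W, f (W * U) ∂μ := by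
    refine integral_mono_of_nonneg ?_ hfi' ?_
    · filter_upwards [hμ.2.1] with W hW
      have hY := det_mul_ne_zero_of_orthogonal hX hW
      refine isoGap_nonneg_of_unit_rows hd _ (fun h0 => ?_) (BN_unit_rows hY)
      have h1 := det_BN_sq hY
      rw [h0, eq_comm, zero_pow two_ne_zero, div_eq_zero_iff] at h1
      rcases h1 with h1 | h1
      · exact hY (pow_eq_zero_iff two_ne_zero |>.1 h1)
      · exact (Finset.prod_pos fun i _ => sum_sq_row_pos hY i).ne' h1
    · filter_upwards [hμ.2.1] with W hW
      exact isoGap_BN_mul_le hd hX hrows hU hl h hW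
  refine hmono.trans_eq ?_
  rw [hμ.integral_mul_right hU hfm]
  simp only [f]
  rw [integral_add (integrable_const _) ((integrable_finsetSum _ fun i _ => hint i).const_mul _),
    integral_const_mul, integral_finsetSum _ fun i _ => hint i]
  have hi : ∀ i, ∫ V, (∑ k, (l k - 1) * V i k ^ 2 -
      (∑ k, (l k - 1) * V i k ^ 2) ^ 2 / (2 * (d : ℝ))) ∂μ =
      -(1 / ((d : ℝ) ^ 2 * (d + 2)) * ∑ k, (l k - 1) ^ 2) := fun i => by
    rw [integral_sub (hμ.integrable_quadratic i _)
      ((hμ.integrable_quadratic_sq i _).div_const _), hμ.integral_quadratic i hz, integral_div,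
      hμ.integral_quadratic_sq hd i hz]
    field_simp
    ring
  simp only [hi]
  simp
  field_simp
  ring

/-- one-step isometry gap decrease for the batch-normalized layer with a
Haar orthogonal weight: (i) if `φ(X) ≤ 1/(16d)` then
`E[φ(BN(WX))] ≤ φ(X)(1 − 1/(2d²))`; (ii) if `φ(X) > 1/(16d)` then
`E[φ(BN(WX))] ≤ φ(X) − 1/(32d³)`. -/
theorem isoGap_one_step_conditional {d : ℕ} (hd : 2 ≤ d)
    (X : Matrix (Fin d) (Fin d) ℝ) (hX : X.det ≠ 0)
    (hrows : ∀ i, ∑ j, X i j ^ 2 = 1)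
    (μ : Measure (Matrix (Fin d) (Fin d) ℝ)) (hμ : IsHaarOrthogonal μ) :
    (isoGap X ≤ 1 / (16 * d) →
        (∫ W, isoGap (BN (W * X)) ∂μ) ≤ isoGap X * (1 - 1 / (2 * (d : ℝ) ^ 2))) ∧
      (isoGap X > 1 / (16 * d) →
        (∫ W, isoGap (BN (W * X)) ∂μ) ≤ isoGap X - 1 / (32 * (d : ℝ) ^ 3)) := by
  have hd0 : 0 < d := by omega
  have hd2 : (2 : ℝ) ≤ d := by exact_mod_cast hd
  have hdpos : (0 : ℝ) < d := by linarith
  obtain ⟨U, l, hU, hl, h⟩ := exists_orthogonal_diagonal X hX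
  have hE := integral_isoGap_BN_mul_le hd0 hX hrows hU hl h hμ
  have hS := min_le_sum_sq (sum_eigen_of_unit_rows hrows hU h)
  have hgap : -∑ k, Real.log (l k) = d * isoGap X := by
    rw [isoGap_eq_sum_log hd0 hrows hU hl h]
    field_simp
  rw [hgap] at hS
  have h0 := isoGap_nonneg_of_unit_rows hd0 X hX hrows
  set S := ∑ k, (l k - 1) ^ 2
  set p := isoGap X
  constructor <;> intro hp <;> refine hE.trans ?_
  · rw [le_div_iff₀ (by positivity)] at hp
    rw [min_eq_right (by linarith)] at hS
    have key : p * (1 / (2 * (d : ℝ) ^ 2)) ≤ 1 / ((d : ℝ) ^ 2 * (d + 2)) * S := by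
      rw [mul_one_div, one_div_mul_eq_div, div_le_div_iff₀ (by positivity) (by positivity)]
      have : p * (d + 2) ≤ 2 * S := by nlinarith
      nlinarith [mul_le_mul_of_nonneg_left this (sq_nonneg (d : ℝ))]
    linarith
  · rw [gt_iff_lt, div_lt_iff₀ (by positivity)] at hp
    have hS' : 1 / 16 ≤ S := le_trans (le_min (by norm_num) (by linarith)) hS
    have key : 1 / (32 * (d : ℝ) ^ 3) ≤ 1 / ((d : ℝ) ^ 2 * (d + 2)) * S := by
      rw [one_div_mul_eq_div, div_le_div_iff₀ (by positivity) (by positivity)]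
      have : (d : ℝ) + 2 ≤ 32 * d * S := by nlinarith
      nlinarith [mul_le_mul_of_nonneg_left this (sq_nonneg (d : ℝ))]
    linarith
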